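/- Let α ∈ (0, 1/2), z = Φ⁻¹(1-α), let ĝ ∈ ℝᵐ be nonzero, let s² > 0, and let N be a positive integer. Define N' = ⌈N s² z² / (ĝᵀĝ)²⌉. If the real random variable T (modeling ĝᵀg(x)) has distribution N(ĝᵀĝ, N s² / N'), then P(T > 0) ≥ 1-α. -/

import Mathlib

/-!
Standardizing, `P(T > 0) = Φ(μ / σ)` with `μ = ĝᵀĝ` and `σ² = N s² / N'`. The sample size `N'` is
the least one for which `σ² z² ≤ μ²`, so that `z ≤ μ / σ`, and `Φ` is increasing. It is positive,
so that `σ²` makes sense: `Φ(0) = 1/2 < 1 - α = Φ(z)`, hence `z ≠ 0`.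
-/

open MeasureTheory ProbabilityTheory
open scoped RealInnerProductSpace

/-- `Φ`, the cumulative distribution function of the standard normal distribution `N(0,1)`. -/
noncomputable def stdNormalCDF (x : ℝ) : ℝ :=
  ProbabilityTheory.cdf (ProbabilityTheory.gaussianReal 0 1) x

open scoped NNReal

lemma monotone_stdNormalCDF : Monotone stdNormalCDF :=
  monotone_cdf _

section Gaussian

variable {μ : ℝ} {v : ℝ≥0}

lemma map_sub_sqrt_mul_gaussianReal_zero_one :
    (gaussianReal 0 1).map (fun x ↦ μ - √v * x) = gaussianReal μ v := by
  have h : HasLaw (id : ℝ → ℝ) (gaussianReal 0 1) (gaussianReal 0 1) := .id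
  have hmap := (gaussianReal_const_sub (gaussianReal_const_mul h √v) μ).map_eq
  have hvar : (⟨√v ^ 2, sq_nonneg _⟩ : ℝ≥0) = v := NNReal.eq (Real.sq_sqrt v.coe_nonneg)
  simpa [hvar] using hmap

lemma measureReal_gaussianReal_Ioi (hv : v ≠ 0) (a : ℝ) :
    (gaussianReal μ v).real (Set.Ioi a) = stdNormalCDF ((μ - a) / √v) := by
  have hσ : 0 < √(v : ℝ) := Real.sqrt_pos.2 (by positivity)
  have hpre : (fun x ↦ μ - √v * x) ⁻¹' Set.Ioi a = Set.Iio ((μ - a) / √v) := by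
    ext x
    rw [Set.mem_preimage, Set.mem_Ioi, Set.mem_Iio, lt_sub_comm, lt_div_iff₀' hσ]
  have := nullSingletonClass_gaussianReal (μ := 0) one_ne_zero
  rw [← map_sub_sqrt_mul_gaussianReal_zero_one,
    map_measureReal_apply (by fun_prop) measurableSet_Ioi, hpre, stdNormalCDF, cdf_eq_real,
    measureReal_congr Iio_ae_eq_Iic]

lemma stdNormalCDF_le_measureReal_gaussianReal_Ioi (hv : v ≠ 0) {a z : ℝ} (ha : a ≤ μ)
    (h : v * z ^ 2 ≤ (μ - a) ^ 2) :
    stdNormalCDF z ≤ (gaussianReal μ v).real (Set.Ioi a) := by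
  have hz : z ≤ (μ - a) / √v :=
    calc z ≤ √((μ - a) ^ 2 / v) :=
          Real.le_sqrt_of_sq_le ((le_div_iff₀' (by positivity)).2 h)
      _ = (μ - a) / √v := by
          rw [Real.sqrt_div (sq_nonneg _), Real.sqrt_sq (sub_nonneg.2 ha)]
  rw [measureReal_gaussianReal_Ioi hv]
  exact monotone_stdNormalCDF hz

end Gaussian

lemma stdNormalCDF_neg (x : ℝ) : stdNormalCDF (-x) = 1 - stdNormalCDF x :=
  calc stdNormalCDF (-x) = (gaussianReal 0 1).real (Set.Ioi x) := by
        simp [measureReal_gaussianReal_Ioi one_ne_zero]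
    _ = 1 - (gaussianReal 0 1).real (Set.Iic x) := by
        rw [← Set.compl_Iic, probReal_compl_eq_one_sub measurableSet_Iic]
    _ = 1 - stdNormalCDF x := by rw [stdNormalCDF, cdf_eq_real]

lemma stdNormalCDF_zero : stdNormalCDF 0 = 1 / 2 := by
  have h := stdNormalCDF_neg 0
  rw [neg_zero] at h
  linarith

lemma ceil_sampleSize_pos {z : ℝ} (hz : stdNormalCDF z ≠ 1 / 2) {μ s2 : ℝ} (hμ : μ ≠ 0)
    (hs2 : 0 < s2) {N : ℕ} (hN : 0 < N) : 0 < ⌈(N : ℝ) * s2 * z ^ 2 / μ ^ 2⌉₊ := by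
  have hz_ne : z ≠ 0 := fun h ↦ hz (h ▸ stdNormalCDF_zero)
  rw [Nat.ceil_pos]
  positivity

theorem single_update_rule_descent_general {E : Type*} [NormedAddCommGroup E]
    [InnerProductSpace ℝ E] (α z : ℝ) (hz : stdNormalCDF z = 1 - α)
    (ghat : E) (hghat : ghat ≠ 0) (s2 : ℝ) (hs2 : 0 < s2) (N : ℕ) (hN : 0 < N)
    (N' : ℕ) (hN'_pos : 0 < N') (hN' : (N : ℝ) * s2 * z ^ 2 / (⟪ghat, ghat⟫ : ℝ) ^ 2 ≤ N')
    {Ω : Type*} [MeasurableSpace Ω] (P : Measure Ω) (T : Ω → ℝ)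
    (hT : Measure.map T P = gaussianReal ⟪ghat, ghat⟫ (((N : ℝ) * s2 / (N' : ℝ)).toNNReal)) :
    ENNReal.ofReal (1 - α) ≤ P {ω | 0 < T ω} := by
  have hμ : 0 < (⟪ghat, ghat⟫ : ℝ) := real_inner_self_pos.2 hghat
  have hv : 0 < (N : ℝ) * s2 / N' := by positivity
  have hvz : (N : ℝ) * s2 / N' * z ^ 2 ≤ (⟪ghat, ghat⟫ : ℝ) ^ 2 := by
    rw [div_le_iff₀ (by positivity)] at hN'
    rw [div_mul_eq_mul_div, div_le_iff₀' (by positivity)]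
    exact hN'
  have hlaw : HasLaw T (gaussianReal ⟪ghat, ghat⟫ ((N : ℝ) * s2 / N').toNNReal) P :=
    ⟨aemeasurable_of_map_neZero (by rw [hT]; infer_instance), hT⟩
  rw [hlaw.measure_eq (p := (0 < ·)) measurableSet_Ioi, ← hz]
  refine ENNReal.ofReal_le_of_le_toReal
    (stdNormalCDF_le_measureReal_gaussianReal_Ioi (Real.toNNReal_pos.2 hv).ne' hμ.le ?_)
  rwa [Real.coe_toNNReal _ hv.le, sub_zero]

/-- Let `α ∈ (0, 1/2)`, `z = Φ⁻¹(1-α)`, `ĝ ∈ ℝᵐ` nonzero, `s² > 0`, `N` a positive integer,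
and `N' = ⌈N s² z² / (ĝᵀĝ)²⌉`. If the real random variable `T` (modeling `ĝᵀg(x)`) has
distribution `N(ĝᵀĝ, N s² / N')`, then `P(T > 0) ≥ 1-α`. -/
theorem single_update_rule_descent (α : ℝ) (hα : α ∈ Set.Ioo (0 : ℝ) (1 / 2))
    (z : ℝ) (hz : stdNormalCDF z = 1 - α) {m : ℕ}
    (ghat : EuclideanSpace ℝ (Fin m)) (hghat : ghat ≠ 0)
    (s2 : ℝ) (hs2 : 0 < s2) (N : ℕ) (hN : 0 < N)
    (N' : ℕ) (hN' : N' = ⌈(N : ℝ) * s2 * z ^ 2 / (⟪ghat, ghat⟫ : ℝ) ^ 2⌉₊)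
    {Ω : Type*} [MeasurableSpace Ω] (P : Measure Ω) [IsProbabilityMeasure P]
    (T : Ω → ℝ)
    (hT : Measure.map T P = gaussianReal ⟪ghat, ghat⟫ (((N : ℝ) * s2 / (N' : ℝ)).toNNReal)) :
    ENNReal.ofReal (1 - α) ≤ P {ω | 0 < T ω} := by
  have hΦ : stdNormalCDF z ≠ 1 / 2 := ne_of_gt (by linarith [hα.2])
  exact single_update_rule_descent_general α z hz ghat hghat s2 hs2 N hN N'
    (hN' ▸ ceil_sampleSize_pos hΦ (inner_self_ne_zero.2 hghat) hs2 hN) (hN' ▸ Nat.le_ceil _) P T hT
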